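/- arXiv:1606.01766 — 2 statements merged into one kernel-verified Lean document; each statement's English description precedes it below -/
import Mathlib

section
/- Let P(λ) = ∑_{k=0}^d λ^k P_k be an n×n matrix polynomial over a field F with d = 2s+1 odd, and let λB+A be a pencil of size (s+1)n×(s+1)n, with A and B partitioned into (s+1)×(s+1) blocks A_{ij}, B_{ij} ∈ F^{n×n}. Then the identity (Λ_s(λ)^T⊗I_n)(λB+A)(Λ_s(λ)⊗I_n) = P(λ) holds if and only if the block conditions ∑_{i+j=d+2−k} B_{ij} + ∑_{i+j=d+1−k} A_{ij} = P_k hold for every k = 0, 1, …, d. In particular, if these conditions hold, then for each σ ∈ {1,−1} the block Kronecker pencil built from λB+A is a strong linearization of P(λ) regarded as grade d. -/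
open Polynomial Matrix
open scoped Kronecker

noncomputable section

/-- Entrywise inclusion of a constant matrix into polynomial matrices. -/
def matC {F : Type} [Field F] {m l : Type*} (M : Matrix m l F) : Matrix m l (Polynomial F) :=
  M.map fun a => (C a : Polynomial F)

/-- The pencil `λ ↦ A + λ B`, represented as a matrix over `F[λ]`. -/
def pencil {F : Type} [Field F] {m l : Type*} (A B : Matrix m l F) :
    Matrix m l (Polynomial F) :=
  matC A + (X : Polynomial F) • matC B

/-- Grade-`g` reversal `rev_g`, applied entrywise. -/
def revMat {F : Type} [Field F] {m l : Type*} (g : ℕ) (M : Matrix m l (Polynomial F)) :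
    Matrix m l (Polynomial F) :=
  M.map fun q => q.reflect g

/-- Entrywise evaluation of a polynomial matrix at a point. -/
def evalMat {F : Type} [Field F] {m l : Type*} (a : F) (M : Matrix m l (Polynomial F)) :
    Matrix m l F :=
  M.map fun q => q.eval a

/-- The matrix polynomial `P(λ) = ∑_{k=0}^d λ^k P_k` built from its coefficients. -/
def polyOfCoeffs {F : Type} [Field F] {n : ℕ} (d : ℕ) (Pc : ℕ → Matrix (Fin n) (Fin n) F) :
    Matrix (Fin n) (Fin n) (Polynomial F) :=
  ∑ k ∈ Finset.range (d + 1), (X : Polynomial F) ^ k • matC (Pc k)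

/-- The `(i,j)` block of a block-partitioned matrix. -/
def blk {α p q n m : Type*} (A : Matrix (p × n) (q × m) α) (i : p) (j : q) :
    Matrix n m α :=
  Matrix.of fun r c => A (i, r) (j, c)

/-- `Λ_s(λ) ⊗ I_n`, an `(s+1)n × n` polynomial matrix whose `i`-th block is `λ^{s-i} I_n`. -/
def Lam (F : Type) [Field F] (s n : ℕ) :
    Matrix (Fin (s+1) × Fin n) (Fin n) (Polynomial F) :=
  Matrix.of fun p c => if p.2 = c then (X : Polynomial F) ^ (s - (p.1 : ℕ)) else 0

/-- The pencil `L_s(λ) ∈ F[λ]^{s×(s+1)}` with `-1` on the diagonal and `λ` on the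
superdiagonal. -/
def Lpen (F : Type) [Field F] (s : ℕ) : Matrix (Fin s) (Fin (s+1)) (Polynomial F) :=
  Matrix.of fun i j =>
    if (j : ℕ) = (i : ℕ) then -1 else if (j : ℕ) = (i : ℕ) + 1 then X else 0

/-- The block Kronecker pencil `[[λB+A, L_s(λ)ᵀ⊗I_n],[σ L_s(λ)⊗I_n, 0]]` associated with a
pencil `M = λB+A` of size `(s+1)n × (s+1)n`. -/
def blockKron (F : Type) [Field F] (s n : ℕ) (σ : F)
    (M : Matrix (Fin (s+1) × Fin n) (Fin (s+1) × Fin n) (Polynomial F)) :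
    Matrix ((Fin (s+1) × Fin n) ⊕ (Fin s × Fin n)) ((Fin (s+1) × Fin n) ⊕ (Fin s × Fin n))
      (Polynomial F) :=
  Matrix.fromBlocks M (Lpen F s ⊗ₖ (1 : Matrix (Fin n) (Fin n) (Polynomial F)))ᵀ
    (σ • (Lpen F s ⊗ₖ (1 : Matrix (Fin n) (Fin n) (Polynomial F)))) 0

/-- `L` is a linearization of `P`: there are unimodular `U`, `V` with
`U L V = diag(I_m, P)` (up to the fixed identification of index sets). -/
def IsLinearization {F : Type} [Field F] (m : ℕ) {ι ρ : Type*} [Fintype ι] [DecidableEq ι]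
    [Fintype ρ] [DecidableEq ρ] (L : Matrix ι ι (Polynomial F))
    (P : Matrix ρ ρ (Polynomial F)) : Prop :=
  ∃ (e : (Fin m ⊕ ρ) ≃ ι) (U V : Matrix ι ι (Polynomial F)),
    IsUnit U.det ∧ IsUnit V.det ∧
      U * L * V =
        (Matrix.fromBlocks (1 : Matrix (Fin m) (Fin m) (Polynomial F)) 0 0 P).submatrix
          e.symm e.symm

/-- The block conditions `∑_{i+j=d+2-k} B_{ij} + ∑_{i+j=d+1-k} A_{ij} = P_k` for
`k = 0,…,d` (blocks are indexed here `0`-based, so `i+j` `1`-based is `i+j+2` `0`-based). -/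
def blockConds {F : Type} [Field F] {s n : ℕ} (d : ℕ) (Pc : ℕ → Matrix (Fin n) (Fin n) F)
    (A B : Matrix (Fin (s+1) × Fin n) (Fin (s+1) × Fin n) F) : Prop :=
  ∀ k, k ≤ d →
    (∑ p ∈ Finset.univ.filter
        (fun p : Fin (s+1) × Fin (s+1) => (p.1 : ℕ) + (p.2 : ℕ) + 2 + k = d + 2),
        blk B p.1 p.2) +
      (∑ p ∈ Finset.univ.filter
        (fun p : Fin (s+1) × Fin (s+1) => (p.1 : ℕ) + (p.2 : ℕ) + 2 + k = d + 1),
        blk A p.1 p.2) = Pc k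

/-- `L̂_t(λ) ⊗ I_n` (with `t = u+1`): first block column zero, remaining block columns
`L_{t-1}(λ) ⊗ I_n`; the column index is split as `Fin n ⊕ (Fin t × Fin n)`. -/
def LhatB (F : Type) [Field F] (u n : ℕ) :
    Matrix (Fin u × Fin n) (Fin n ⊕ Fin (u+1) × Fin n) (Polynomial F) :=
  Matrix.of fun p q =>
    match q with
    | Sum.inl _ => 0
    | Sum.inr c => (Lpen F u ⊗ₖ (1 : Matrix (Fin n) (Fin n) (Polynomial F))) p c

/-- The modified block Kronecker pencil `[[λB+A, L̂_t(λ)ᵀ⊗I_n],[σ L̂_t(λ)⊗I_n, 0]]`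
(with `t = u+1`). -/
def modBK (F : Type) [Field F] (u n : ℕ) (σ : F)
    (M : Matrix (Fin n ⊕ Fin (u+1) × Fin n) (Fin n ⊕ Fin (u+1) × Fin n) (Polynomial F)) :
    Matrix ((Fin n ⊕ Fin (u+1) × Fin n) ⊕ Fin u × Fin n)
      ((Fin n ⊕ Fin (u+1) × Fin n) ⊕ Fin u × Fin n) (Polynomial F) :=
  Matrix.fromBlocks M (LhatB F u n)ᵀ (σ • LhatB F u n) 0

/-- `Λ̂_t(λ) ⊗ I_n` (with `t = u+1`): the `(t+1)n × 2n` polynomial matrix whose transpose has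
block rows `(I_n, 0, …, 0)` and `(0, λ^{t-1}I_n, …, λ I_n, I_n)`. -/
def LamHatB (F : Type) [Field F] (u n : ℕ) :
    Matrix (Fin n ⊕ Fin (u+1) × Fin n) (Fin 2 × Fin n) (Polynomial F) :=
  Matrix.of fun q c =>
    match q with
    | Sum.inl r => if c.1 = 0 ∧ c.2 = r then 1 else 0
    | Sum.inr p => if c.1 = 1 ∧ c.2 = p.2 then (X : Polynomial F) ^ (u - (p.1 : ℕ)) else 0

/-- `Λ̃_t(λ) ⊗ I_n` (with `t = u+1`): the `(t+1)n × 2n` polynomial matrix whose transpose has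
block rows `(I_n, 0, …, 0)` and `(0, I_n, λ I_n, …, λ^{t-1} I_n)`. -/
def LamTildeB (F : Type) [Field F] (u n : ℕ) :
    Matrix (Fin n ⊕ Fin (u+1) × Fin n) (Fin 2 × Fin n) (Polynomial F) :=
  Matrix.of fun q c =>
    match q with
    | Sum.inl r => if c.1 = 0 ∧ c.2 = r then 1 else 0
    | Sum.inr p => if c.1 = 1 ∧ c.2 = p.2 then (X : Polynomial F) ^ (p.1 : ℕ) else 0

/-- A `2n × 2n` matrix assembled from four `n × n` blocks, indexed by `Fin 2 × Fin n`. -/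
def twoBlock {α : Type*} {n : ℕ} (W₁₁ W₁₂ W₂₁ W₂₂ : Matrix (Fin n) (Fin n) α) :
    Matrix (Fin 2 × Fin n) (Fin 2 × Fin n) α :=
  Matrix.of fun p q =>
    if p.1 = 0 then (if q.1 = 0 then W₁₁ p.2 q.2 else W₁₂ p.2 q.2)
    else (if q.1 = 0 then W₂₁ p.2 q.2 else W₂₂ p.2 q.2)

/-- `Λ_t(λ) ⊗ I_n` (with `t = u+1`), over the split row index `Fin n ⊕ (Fin t × Fin n)`:
block entries `λ^t I_n, λ^{t-1} I_n, …, λ I_n, I_n`. -/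
def LamFullB (F : Type) [Field F] (u n : ℕ) :
    Matrix (Fin n ⊕ Fin (u+1) × Fin n) (Fin n) (Polynomial F) :=
  Matrix.of fun q c =>
    match q with
    | Sum.inl r => if r = c then (X : Polynomial F) ^ (u + 1) else 0
    | Sum.inr p => if p.2 = c then (X : Polynomial F) ^ (u - (p.1 : ℕ)) else 0

/-- `N̂_t(λ) = Ĥ_t(λ) ⊗ I_n` (with `t = u+1`): `Ĥ_t ∈ F[λ]^{(t-1)×(t+1)}` has `(i,j)` entry
`λ^{i+1-j}` if `2 ≤ j ≤ i+1` and `0` otherwise. -/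
def NhatB (F : Type) [Field F] (u n : ℕ) :
    Matrix (Fin u × Fin n) (Fin n ⊕ Fin (u+1) × Fin n) (Polynomial F) :=
  Matrix.of fun p q =>
    match q with
    | Sum.inl _ => 0
    | Sum.inr c =>
        if (c.1 : ℕ) ≤ (p.1 : ℕ) ∧ p.2 = c.2 then
          (X : Polynomial F) ^ ((p.1 : ℕ) - (c.1 : ℕ)) else 0

end

/-!
Adding the last unit row to `L_s` gives a unimodular matrix, and the last column of its inverse is
`Λ_s`. Block elimination with the rows and columns expressed in these bases turns the two copies
of `L_s ⊗ I_n` in the block Kronecker pencil of `M` into identities and leaves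
`(Λ_sᵀ ⊗ I_n) M (Λ_s ⊗ I_n)` as the complementary block. Reversal changes `L_s` and `Λ_s` only by
a sign and by reversing the order of rows and columns, so the same elimination applies to the
reversed pencil. The block conditions are the identity `(Λ_sᵀ ⊗ I_n)(λB+A)(Λ_s ⊗ I_n) = P`
read off coefficient by coefficient.
-/

section DualPairs

variable {R : Type*} [CommRing R] {m k r : Type*} [Fintype m] [Fintype k] [Fintype r]
  [DecidableEq m] [DecidableEq r]

/-- `K` and `N` are the complementary parts of a unimodular matrix and its inverse: some `E` and
`K'` make `[K; E]` and `[K', N]` square and mutually inverse. Over `F[λ]` these are the dual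
minimal bases `K`, `Nᵀ` from which block Kronecker pencils are built. -/
structure IsDualPair (K : Matrix m k R) (N : Matrix k r R) : Prop where
  card_add_card : Fintype.card m + Fintype.card r = Fintype.card k
  mul_eq_zero : K * N = 0
  exists_completion : ∃ (E : Matrix r k R) (K' : Matrix k m R),
    K * K' = 1 ∧ E * K' = 0 ∧ E * N = 1

namespace IsDualPair

variable {K : Matrix m k R} {N : Matrix k r R}

lemma submatrix {m' k' r' : Type*} [Fintype m'] [Fintype k'] [Fintype r'] [DecidableEq m']
    [DecidableEq r'] (h : IsDualPair K N) (e : m' ≃ m) (f : k' ≃ k) (g : r' ≃ r) :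
    IsDualPair (K.submatrix e f) (N.submatrix f g) := by
  obtain ⟨E, K', hKK', hEK', hEN⟩ := h.exists_completion
  refine ⟨?_, ?_, E.submatrix g f, K'.submatrix f e, ?_, ?_, ?_⟩
  · rw [Fintype.card_congr e, Fintype.card_congr f, Fintype.card_congr g, h.card_add_card]
  · rw [submatrix_mul_equiv, h.mul_eq_zero, submatrix_zero, Pi.zero_apply, Pi.zero_apply]
  · rw [submatrix_mul_equiv, hKK', submatrix_one_equiv]
  · rw [submatrix_mul_equiv, hEK', submatrix_zero, Pi.zero_apply, Pi.zero_apply]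
  · rw [submatrix_mul_equiv, hEN, submatrix_one_equiv]

lemma units_smul {S : Type*} [CommSemiring S] [Algebra S R] (h : IsDualPair K N) (u : Sˣ) :
    IsDualPair ((u : S) • K) N := by
  obtain ⟨E, K', hKK', hEK', hEN⟩ := h.exists_completion
  refine ⟨h.card_add_card, ?_, E, (↑u⁻¹ : S) • K', ?_, ?_, hEN⟩
  · rw [smul_mul, h.mul_eq_zero, smul_zero]
  · rw [smul_mul, Matrix.mul_smul, hKK', smul_smul, Units.mul_inv, one_smul]
  · rw [Matrix.mul_smul, hEK', smul_zero]

lemma neg (h : IsDualPair K N) : IsDualPair (-K) N := by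
  simpa using h.units_smul (-1 : Rˣ)

lemma kronecker_one (h : IsDualPair K N) (l : Type*) [Fintype l] [DecidableEq l] :
    IsDualPair (K ⊗ₖ (1 : Matrix l l R)) (N ⊗ₖ (1 : Matrix l l R)) := by
  obtain ⟨E, K', hKK', hEK', hEN⟩ := h.exists_completion
  refine ⟨?_, ?_, E ⊗ₖ 1, K' ⊗ₖ 1, ?_, ?_, ?_⟩
  · simp only [Fintype.card_prod, ← add_mul, h.card_add_card]
  · rw [← mul_kronecker_mul, h.mul_eq_zero, zero_kronecker]
  · rw [← mul_kronecker_mul, hKK', mul_one, one_kronecker_one]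
  · rw [← mul_kronecker_mul, hEK', zero_kronecker]
  · rw [← mul_kronecker_mul, hEN, mul_one, one_kronecker_one]

end IsDualPair

end DualPairs

section BlockElimination

variable {R : Type*} {m m₁ m₂ k k₁ k₂ r r₁ r₂ : Type*}

lemma fromRows_add_fromRows [Add R] (A₁ B₁ : Matrix m₁ k R) (A₂ B₂ : Matrix m₂ k R) :
    fromRows A₁ A₂ + fromRows B₁ B₂ = fromRows (A₁ + B₁) (A₂ + B₂) := by
  ext (i | i) j <;> rfl

lemma fromCols_add_fromCols [Add R] (A₁ B₁ : Matrix m k₁ R) (A₂ B₂ : Matrix m k₂ R) :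
    fromCols A₁ A₂ + fromCols B₁ B₂ = fromCols (A₁ + B₁) (A₂ + B₂) := by
  ext i (j | j) <;> rfl

variable [Ring R] [Fintype k₁] [Fintype k₂] [DecidableEq m₁] [DecidableEq m₂]

/-- The row operations that, together with `rightEliminator`, reduce `[[M, J], [K, 0]]` to
`diag(1, 1, N₂ M N₁)`. Here `K'` is a right inverse of `K`, `J'` a left inverse of `J`, and
`N₂ J = 0`. -/
def leftEliminator (M : Matrix k₂ k₁ R) (K' : Matrix k₁ m₁ R) (J' : Matrix m₂ k₂ R)
    (N₂ : Matrix r₂ k₂ R) : Matrix ((m₁ ⊕ m₂) ⊕ r₂) (k₂ ⊕ m₁) R :=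
  fromBlocks (fromRows 0 J') (fromRows 1 (-(J' * M * K'))) N₂ (-(N₂ * M * K'))

/-- The column operations that, together with `leftEliminator`, reduce `[[M, J], [K, 0]]` to
`diag(1, 1, N₂ M N₁)`. Here `K'` is a right inverse of `K`, `J'` a left inverse of `J`, and
`K N₁ = 0`. -/
def rightEliminator (M : Matrix k₂ k₁ R) (K' : Matrix k₁ m₁ R) (J' : Matrix m₂ k₂ R)
    (N₁ : Matrix k₁ r₁ R) : Matrix (k₁ ⊕ m₂) ((m₁ ⊕ m₂) ⊕ r₁) R :=
  fromBlocks (fromCols K' 0) N₁ (fromCols 0 1) (-(J' * M * N₁))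

variable (M : Matrix k₂ k₁ R)

lemma leftEliminator_mul_fromBlocks_eq_one [Fintype m₁] [DecidableEq r₂] (K' : Matrix k₁ m₁ R)
    {J : Matrix k₂ m₂ R} {J' : Matrix m₂ k₂ R} {N₂ : Matrix r₂ k₂ R} {E : Matrix k₂ r₂ R}
    (hJJ : J' * J = 1) (hNJ : N₂ * J = 0) (hJE : J' * E = 0) (hNE : N₂ * E = 1) :
    leftEliminator M K' J' N₂ *
      fromBlocks (fromCols (M * K') J) E (fromCols (1 : Matrix m₁ m₁ R) 0) 0 = 1 := by
  simp only [leftEliminator, fromBlocks_multiply, fromRows_mul_fromCols, fromBlocks_add]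
  simp [fromRows_mul, mul_fromCols, fromCols_add_fromCols, Matrix.mul_assoc, hJJ, hNJ, hJE, hNE]

lemma fromBlocks_mul_rightEliminator_eq_one [Fintype m₂] [Fintype r₁] [DecidableEq r₁]
    (J' : Matrix m₂ k₂ R) {K : Matrix m₁ k₁ R} {K' : Matrix k₁ m₁ R} {N₁ : Matrix k₁ r₁ R}
    {E : Matrix r₁ k₁ R}
    (hKK : K * K' = 1) (hKN : K * N₁ = 0) (hEK : E * K' = 0) (hEN : E * N₁ = 1) :
    fromBlocks (fromRows K (J' * M * N₁ * E)) (fromRows 0 (1 : Matrix m₂ m₂ R)) E 0 *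
      rightEliminator M K' J' N₁ = 1 := by
  simp only [rightEliminator, fromBlocks_multiply, fromRows_mul_fromCols, fromBlocks_add]
  simp [fromRows_mul, mul_fromCols, fromRows_add_fromRows, Matrix.mul_assoc, hKK, hKN, hEK, hEN]

lemma leftEliminator_mul_fromBlocks_mul_rightEliminator [Fintype m₁] [Fintype m₂]
    {K : Matrix m₁ k₁ R} {J : Matrix k₂ m₂ R} {K' : Matrix k₁ m₁ R} {J' : Matrix m₂ k₂ R}
    {N₁ : Matrix k₁ r₁ R} {N₂ : Matrix r₂ k₂ R}
    (hKK : K * K' = 1) (hJJ : J' * J = 1) (hKN : K * N₁ = 0) (hNJ : N₂ * J = 0) :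
    leftEliminator M K' J' N₂ * fromBlocks M J K 0 * rightEliminator M K' J' N₁ =
      fromBlocks 1 0 0 (N₂ * M * N₁) := by
  have hcols : fromBlocks M J K 0 * rightEliminator M K' J' N₁ =
      fromBlocks (fromCols (M * K') J) (M * N₁ - J * (J' * M * N₁)) (fromCols 1 0) 0 := by
    simp [rightEliminator, fromBlocks_multiply, mul_fromCols, fromCols_add_fromCols, hKK, hKN,
      sub_eq_add_neg]
  have hJJM : J' * (J * (J' * (M * N₁))) = J' * (M * N₁) := by
    rw [← Matrix.mul_assoc, hJJ, Matrix.one_mul]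
  have hNJM : N₂ * (J * (J' * (M * N₁))) = 0 := by
    rw [← Matrix.mul_assoc, hNJ, Matrix.zero_mul]
  rw [Matrix.mul_assoc, hcols]
  simp only [leftEliminator, fromBlocks_multiply, fromRows_mul_fromCols, fromBlocks_add]
  simp [fromRows_mul, mul_fromCols, fromCols_add_fromCols, Matrix.mul_sub, Matrix.mul_assoc,
    hJJ, hNJ, hJJM, hNJM]

end BlockElimination

section Linearization

variable {F : Type} [Field F]

lemma isLinearization_of_mul_mul_eq_fromBlocks {ι κ ρ : Type*} [Fintype ι] [Fintype κ] [Fintype ρ]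
    [DecidableEq ι] [DecidableEq κ] [DecidableEq ρ] {L : Matrix ι ι F[X]} {P : Matrix ρ ρ F[X]}
    {U V' : Matrix (κ ⊕ ρ) ι F[X]} {U' V : Matrix ι (κ ⊕ ρ) F[X]}
    (hcard : Fintype.card κ + Fintype.card ρ = Fintype.card ι)
    (hU : U * U' = 1) (hV : V' * V = 1) (hL : U * L * V = fromBlocks 1 0 0 P) :
    IsLinearization (Fintype.card κ) L P := by
  let e : Fin (Fintype.card κ) ⊕ ρ ≃ κ ⊕ ρ := (Fintype.equivFin κ).symm.sumCongr (.refl ρ)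
  let f : κ ⊕ ρ ≃ ι := Fintype.equivOfCardEq (by rw [Fintype.card_sum, hcard])
  have h_reindex : (fromBlocks 1 0 0 P : Matrix (κ ⊕ ρ) (κ ⊕ ρ) F[X]) =
      (fromBlocks 1 0 0 P).submatrix e.symm e.symm := by
    ext1 i j
    rcases i with i | i <;> rcases j with j | j <;> simp [e, one_apply]
  refine ⟨e.trans f, U.submatrix f.symm id, V.submatrix id f.symm, ?_, ?_, ?_⟩
  · refine isUnit_det_of_right_inverse (B := U'.submatrix id f.symm) ?_
    rw [← submatrix_mul _ _ _ _ _ Function.bijective_id, hU, submatrix_one_equiv]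
  · refine isUnit_det_of_left_inverse (B := V'.submatrix f.symm id) ?_
    rw [← submatrix_mul _ _ _ _ _ Function.bijective_id, hV, submatrix_one_equiv]
  · calc U.submatrix f.symm id * L * V.submatrix id f.symm
        = (U * L * V).submatrix f.symm f.symm := by
          rw [submatrix_mul _ _ _ id _ Function.bijective_id,
            submatrix_mul _ _ _ id _ Function.bijective_id, submatrix_id_id]
      _ = _ := by rw [hL, h_reindex, submatrix_submatrix]; rfl

variable {m k r : Type*} [Fintype m] [Fintype k] [Fintype r]
  [DecidableEq m] [DecidableEq k] [DecidableEq r]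

theorem IsDualPair.isLinearization_fromBlocks {K₁ K₂ : Matrix m k F[X]} {N₁ N₂ : Matrix k r F[X]}
    (h₁ : IsDualPair K₁ N₁) (h₂ : IsDualPair K₂ N₂) (M : Matrix k k F[X]) :
    IsLinearization (2 * Fintype.card m) (fromBlocks M K₂ᵀ K₁ 0) (N₂ᵀ * M * N₁) := by
  obtain ⟨E₁, K₁', hKK₁, hEK₁, hEN₁⟩ := h₁.exists_completion
  obtain ⟨E₂, K₂', hKK₂, hEK₂, hEN₂⟩ := h₂.exists_completion
  have hJJ : K₂'ᵀ * K₂ᵀ = 1 := by rw [← transpose_mul, hKK₂, transpose_one]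
  have hNJ : N₂ᵀ * K₂ᵀ = 0 := by rw [← transpose_mul, h₂.mul_eq_zero, transpose_zero]
  have hJE : K₂'ᵀ * E₂ᵀ = 0 := by rw [← transpose_mul, hEK₂, transpose_zero]
  have hNE : N₂ᵀ * E₂ᵀ = 1 := by rw [← transpose_mul, hEN₂, transpose_one]
  have hcard : Fintype.card (m ⊕ m) + Fintype.card r = Fintype.card (k ⊕ m) := by
    simp only [Fintype.card_sum, ← h₁.card_add_card]
    ring
  rw [two_mul, ← Fintype.card_sum]
  exact isLinearization_of_mul_mul_eq_fromBlocks hcard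
    (leftEliminator_mul_fromBlocks_eq_one M K₁' hJJ hNJ hJE hNE)
    (fromBlocks_mul_rightEliminator_eq_one M K₂'ᵀ hKK₁ h₁.mul_eq_zero hEK₁ hEN₁)
    (leftEliminator_mul_fromBlocks_mul_rightEliminator M hKK₁ hJJ h₁.mul_eq_zero hNJ)

end Linearization

section LpenDual

variable {F : Type} [Field F]

/-- The column vector `Λ_s(λ) = (λ^s, …, λ, 1)ᵀ`. -/
noncomputable def LamColumn (F : Type) [Field F] (s : ℕ) : Matrix (Fin (s + 1)) Unit F[X] :=
  of fun i _ => X ^ (s - (i : ℕ))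

lemma Lpen_mul_apply {s : ℕ} {l : Type*} (N : Matrix (Fin (s + 1)) l F[X]) (i : Fin s) (j : l) :
    (Lpen F s * N) i j = X * N i.succ j - N i.castSucc j := by
  have h_entry (t : Fin (s + 1)) : Lpen F s i t * N t j =
      (if t = i.castSucc then -N t j else 0) + if t = i.succ then X * N t j else 0 := by
    simp only [Lpen, of_apply, Fin.ext_iff, Fin.val_castSucc, Fin.val_succ]
    split_ifs <;> first | omega | simp
  simp only [mul_apply, h_entry, Finset.sum_add_distrib, Finset.sum_ite_eq', Finset.mem_univ,
    if_true]
  ring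

lemma isDualPair_Lpen_LamColumn (s : ℕ) : IsDualPair (Lpen F s) (LamColumn F s) where
  card_add_card := by simp
  mul_eq_zero := by
    ext1 i j
    have h_exp : s - (i : ℕ) = (s - (i + 1)) + 1 := by omega
    simp only [Lpen_mul_apply, LamColumn, of_apply, Fin.val_succ, Fin.val_castSucc,
      Matrix.zero_apply]
    rw [h_exp, pow_succ', sub_self]
  exists_completion := by
    -- The second witness is the first `s` columns of the inverse of `[L_s; e_{s+1}ᵀ]`.
    refine ⟨single () (Fin.last s) 1,
      of fun i j => if (i : ℕ) ≤ j then -X ^ ((j : ℕ) - i) else 0, ?_, ?_, ?_⟩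
    · ext1 i j
      simp only [Lpen_mul_apply, of_apply, Fin.val_succ, Fin.val_castSucc, one_apply, Fin.ext_iff]
      rcases lt_trichotomy (i : ℕ) j with hij | hij | hij
      · have h_exp : (j : ℕ) - i = (j - (i + 1)) + 1 := by omega
        rw [if_pos (by omega), if_pos hij.le, if_neg hij.ne, h_exp, pow_succ']
        ring
      · simp [hij]
      · rw [if_neg (by omega), if_neg (by omega), if_neg hij.ne', mul_zero, sub_zero]
    · ext1 i j
      simp [single_mul_apply_same]
    · ext1 i j
      simp [LamColumn, single_mul_apply_same]

lemma Lam_eq_submatrix_kronecker (s n : ℕ) :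
    Lam F s n = (LamColumn F s ⊗ₖ (1 : Matrix (Fin n) (Fin n) F[X])).submatrix id
      (Equiv.punitProd (Fin n)).symm := by
  ext1 i j
  simp [Lam, LamColumn, one_apply]

lemma isDualPair_Lpen_Lam (s n : ℕ) :
    IsDualPair (Lpen F s ⊗ₖ (1 : Matrix (Fin n) (Fin n) F[X])) (Lam F s n) := by
  rw [Lam_eq_submatrix_kronecker]
  exact ((isDualPair_Lpen_LamColumn s).kronecker_one (Fin n)).submatrix (.refl _) (.refl _) _

end LpenDual

section Reversal

variable {F : Type} [Field F] {m k l : Type*}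

/-- All entries of `M` have degree at most `g`, so that `rev_g M` is a genuine reversal. -/
def HasGrade (g : ℕ) (M : Matrix m k F[X]) : Prop :=
  ∀ i j, (M i j).natDegree ≤ g

lemma HasGrade.transpose {g : ℕ} {M : Matrix m k F[X]} (hM : HasGrade g M) : HasGrade g Mᵀ :=
  fun i j => hM j i

lemma HasGrade.mul [Fintype k] {g h : ℕ} {M : Matrix m k F[X]} {N : Matrix k l F[X]}
    (hM : HasGrade g M) (hN : HasGrade h N) : HasGrade (g + h) (M * N) := fun i j =>
  natDegree_sum_le_of_forall_le _ _ fun t _ => natDegree_mul_le_of_le (hM i t) (hN t j)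

lemma hasGrade_pencil (A B : Matrix m k F) : HasGrade 1 (pencil A B) := fun i j => by
  simp only [pencil, matC, Matrix.add_apply, Matrix.smul_apply, map_apply, smul_eq_mul]
  compute_degree

lemma hasGrade_Lam (s n : ℕ) : HasGrade s (Lam F s n) := fun _ _ => by
  simp only [Lam, of_apply]
  split_ifs
  · exact (natDegree_X_pow _).trans_le (Nat.sub_le _ _)
  · simp

lemma reflect_sum {R ι : Type*} [Semiring R] (g : ℕ) (t : Finset ι) (f : ι → R[X]) :
    (∑ i ∈ t, f i).reflect g = ∑ i ∈ t, (f i).reflect g :=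
  map_sum (⟨⟨reflect g, reflect_zero⟩, fun p q => reflect_add p q g⟩ : R[X] →+ R[X]) f t

lemma revMat_mul [Fintype k] {g h : ℕ} {M : Matrix m k F[X]} {N : Matrix k l F[X]}
    (hM : HasGrade g M) (hN : HasGrade h N) :
    revMat (g + h) (M * N) = revMat g M * revMat h N := by
  ext1 i j
  simp only [revMat, map_apply, mul_apply, reflect_sum]
  exact Finset.sum_congr rfl fun t _ => reflect_mul _ _ (hM i t) (hN t j)

lemma revMat_transpose (g : ℕ) (M : Matrix m k F[X]) : revMat g Mᵀ = (revMat g M)ᵀ := rfl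

lemma revMat_zero (g : ℕ) : revMat g (0 : Matrix m k F[X]) = 0 :=
  Matrix.ext fun _ _ => reflect_zero

lemma revMat_smul (g : ℕ) (a : F) (M : Matrix m k F[X]) :
    revMat g (a • M) = a • revMat g M := by
  ext1 i j
  simp [revMat, smul_eq_C_mul, reflect_C_mul]

lemma revMat_kronecker_one [DecidableEq l] (g : ℕ) (M : Matrix m k F[X]) :
    revMat g (M ⊗ₖ (1 : Matrix l l F[X])) = revMat g M ⊗ₖ 1 := by
  ext1 i j
  by_cases h : i.2 = j.2 <;> simp [revMat, one_apply, h]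

lemma revMat_pencil (A B : Matrix m k F) : revMat 1 (pencil A B) = pencil B A := by
  ext1 i j
  simp [revMat, pencil, matC, reflect_C, mul_comm X, reflect_add, reflect_C_mul, add_comm]

lemma revMat_one_Lpen (s : ℕ) :
    revMat 1 (Lpen F s) = -(Lpen F s).submatrix Fin.revPerm Fin.revPerm := by
  ext1 i j
  have h_diag : (j.rev : ℕ) = i.rev ↔ (j : ℕ) = i + 1 := by
    simp only [Fin.val_rev]
    omega
  have h_super : (j.rev : ℕ) = i.rev + 1 ↔ (j : ℕ) = i := by
    simp only [Fin.val_rev]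
    omega
  simp only [revMat, Lpen, map_apply, of_apply, Matrix.neg_apply, submatrix_apply,
    Fin.revPerm_apply, h_diag, h_super]
  split_ifs <;> first | omega | simp [reflect_neg]

lemma revMat_Lam (s n : ℕ) :
    revMat s (Lam F s n) = (Lam F s n).submatrix (Fin.revPerm.prodCongr (.refl _)) id := by
  ext1 i j
  by_cases h : i.2 = j
  · simp [revMat, Lam, h, Fin.val_rev, reflect_monomial, revAt_le]
  · simp [revMat, Lam, h]

lemma isDualPair_revMat_Lpen_Lam (s n : ℕ) :
    IsDualPair (revMat 1 (Lpen F s ⊗ₖ (1 : Matrix (Fin n) (Fin n) F[X])))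
      (revMat s (Lam F s n)) := by
  let rowRev : Fin s × Fin n ≃ Fin s × Fin n := Fin.revPerm.prodCongr (.refl _)
  let colRev : Fin (s + 1) × Fin n ≃ Fin (s + 1) × Fin n := Fin.revPerm.prodCongr (.refl _)
  have h_rev : revMat 1 (Lpen F s ⊗ₖ (1 : Matrix (Fin n) (Fin n) F[X])) =
      -(Lpen F s ⊗ₖ (1 : Matrix (Fin n) (Fin n) F[X])).submatrix rowRev colRev := by
    rw [revMat_kronecker_one, revMat_one_Lpen]
    ext1 i j
    exact neg_mul _ _
  rw [h_rev, revMat_Lam]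
  exact ((isDualPair_Lpen_Lam s n).submatrix rowRev colRev (.refl _)).neg

lemma revMat_blockKron (s n : ℕ) (σ : F)
    (M : Matrix (Fin (s + 1) × Fin n) (Fin (s + 1) × Fin n) F[X]) :
    revMat 1 (blockKron F s n σ M) =
      fromBlocks (revMat 1 M) (revMat 1 (Lpen F s ⊗ₖ (1 : Matrix (Fin n) (Fin n) F[X])))ᵀ
        (σ • revMat 1 (Lpen F s ⊗ₖ (1 : Matrix (Fin n) (Fin n) F[X]))) 0 := by
  rw [← revMat_smul, ← revMat_transpose, ← revMat_zero 1]
  exact fromBlocks_map ..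

end Reversal

section BlockCoefficients

variable {F : Type} [Field F] {n : ℕ}

lemma matC_add {m l : Type*} (M N : Matrix m l F) : matC (M + N) = matC M + matC N :=
  Matrix.map_add _ (fun _ _ => C_add) M N

lemma coeff_polyOfCoeffs_apply (d k : ℕ) (Q : ℕ → Matrix (Fin n) (Fin n) F) (i j : Fin n) :
    (polyOfCoeffs d Q i j).coeff k = if k ≤ d then Q k i j else 0 := by
  simp [polyOfCoeffs, matC, Matrix.sum_apply]

lemma polyOfCoeffs_inj {d : ℕ} {P Q : ℕ → Matrix (Fin n) (Fin n) F} :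
    polyOfCoeffs d P = polyOfCoeffs d Q ↔ ∀ k ≤ d, P k = Q k := by
  refine ⟨fun h k hk => ?_, fun h => ?_⟩
  · ext1 i j
    have h_coeff := congrArg (fun M : Matrix (Fin n) (Fin n) F[X] => (M i j).coeff k) h
    simpa only [coeff_polyOfCoeffs_apply, if_pos hk] using h_coeff
  · exact Finset.sum_congr rfl fun k hk => by rw [h k (Finset.mem_range_succ_iff.mp hk)]

lemma polyOfCoeffs_add (d : ℕ) (P Q : ℕ → Matrix (Fin n) (Fin n) F) :
    polyOfCoeffs d (fun k => P k + Q k) = polyOfCoeffs d P + polyOfCoeffs d Q := by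
  simp only [polyOfCoeffs, matC_add, smul_add, Finset.sum_add_distrib]

lemma sum_X_pow_smul_matC {ι : Type*} {d : ℕ} {t : Finset ι} {w : ι → ℕ}
    (hw : ∀ i ∈ t, w i ≤ d) (Q : ι → Matrix (Fin n) (Fin n) F) :
    ∑ i ∈ t, (X : F[X]) ^ w i • matC (Q i) =
      polyOfCoeffs d fun k => ∑ i ∈ t with w i = k, Q i := by
  have h_matC_sum (u : Finset ι) : matC (∑ i ∈ u, Q i) = ∑ i ∈ u, matC (Q i) :=
    map_sum (C : F →+* F[X]).toAddMonoidHom.mapMatrix Q u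
  simp only [polyOfCoeffs, h_matC_sum, Finset.smul_sum]
  rw [← Finset.sum_fiberwise_of_maps_to fun i hi => Finset.mem_range_succ_iff.mpr (hw i hi)]
  refine Finset.sum_congr rfl fun k _ => Finset.sum_congr rfl fun i hi => ?_
  rw [(Finset.mem_filter.mp hi).2]

variable {s : ℕ}

lemma mul_Lam_apply {l : Type*} (M : Matrix l (Fin (s + 1) × Fin n) F[X]) (i : l) (c : Fin n) :
    (M * Lam F s n) i c = ∑ q : Fin (s + 1), M i (q, c) * X ^ (s - (q : ℕ)) := by
  simp [mul_apply, Lam, Fintype.sum_prod_type]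

lemma Lam_transpose_mul_apply {l : Type*} (M : Matrix (Fin (s + 1) × Fin n) l F[X]) (r : Fin n)
    (j : l) :
    ((Lam F s n)ᵀ * M) r j =
      ∑ p : Fin (s + 1), X ^ (s - (p : ℕ)) * M (p, r) j := by
  simp [mul_apply, Lam, Fintype.sum_prod_type]

lemma Lam_transpose_mul_mul_Lam
    (M : Matrix (Fin (s + 1) × Fin n) (Fin (s + 1) × Fin n) F[X]) :
    (Lam F s n)ᵀ * M * Lam F s n =
      ∑ p : Fin (s + 1) × Fin (s + 1), (X : F[X]) ^ (2 * s - (p.1 + p.2 : ℕ)) • blk M p.1 p.2 := by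
  ext1 r c
  have h_exp (p q : Fin (s + 1)) : 2 * s - (p + q : ℕ) = (s - p) + (s - q) := by omega
  simp only [mul_Lam_apply, Lam_transpose_mul_apply, Matrix.sum_apply, Matrix.smul_apply, blk,
    of_apply, smul_eq_mul, h_exp, Fintype.sum_prod_type_right, Finset.sum_mul]
  refine Finset.sum_congr rfl fun q _ => Finset.sum_congr rfl fun p _ => ?_
  ring

/-- The sum of the blocks of `λB + A` on the antidiagonals that contribute to `λ^k` in
`(Λ_s(λ)ᵀ ⊗ I_n)(λB + A)(Λ_s(λ) ⊗ I_n)` when `d = 2s + 1`; blocks are indexed from `0`. -/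
def blockCoeff (d : ℕ) (A B : Matrix (Fin (s + 1) × Fin n) (Fin (s + 1) × Fin n) F) (k : ℕ) :
    Matrix (Fin n) (Fin n) F :=
  (∑ p : Fin (s + 1) × Fin (s + 1) with (p.1 : ℕ) + (p.2 : ℕ) + 2 + k = d + 2, blk B p.1 p.2) +
    ∑ p : Fin (s + 1) × Fin (s + 1) with (p.1 : ℕ) + (p.2 : ℕ) + 2 + k = d + 1, blk A p.1 p.2

lemma Lam_transpose_mul_pencil_mul_Lam
    (A B : Matrix (Fin (s + 1) × Fin n) (Fin (s + 1) × Fin n) F) :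
    (Lam F s n)ᵀ * pencil A B * Lam F s n =
      polyOfCoeffs (2 * s + 1) (blockCoeff (2 * s + 1) A B) := by
  have h_blk (p : Fin (s + 1) × Fin (s + 1)) :
      (X : F[X]) ^ (2 * s - (p.1 + p.2 : ℕ)) • blk (pencil A B) p.1 p.2 =
        (X : F[X]) ^ (2 * s + 1 - (p.1 + p.2 : ℕ)) • matC (blk B p.1 p.2) +
          (X : F[X]) ^ (2 * s - (p.1 + p.2 : ℕ)) • matC (blk A p.1 p.2) := by
    have h_exp : 2 * s + 1 - (p.1 + p.2 : ℕ) = 2 * s - (p.1 + p.2 : ℕ) + 1 := by omega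
    ext1 r c
    simp only [h_exp, pow_succ, blk, pencil, matC, of_apply, Matrix.add_apply, Matrix.smul_apply,
      map_apply, smul_eq_mul]
    ring
  simp only [Lam_transpose_mul_mul_Lam, h_blk, Finset.sum_add_distrib]
  rw [sum_X_pow_smul_matC (d := 2 * s + 1) (fun p _ => by omega),
    sum_X_pow_smul_matC (d := 2 * s + 1) (fun p _ => by omega), ← polyOfCoeffs_add]
  have h_B (k : ℕ) (p : Fin (s + 1) × Fin (s + 1)) :
      2 * s + 1 - (p.1 + p.2 : ℕ) = k ↔ (p.1 : ℕ) + p.2 + 2 + k = 2 * s + 1 + 2 := by omega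
  have h_A (k : ℕ) (p : Fin (s + 1) × Fin (s + 1)) :
      2 * s - (p.1 + p.2 : ℕ) = k ↔ (p.1 : ℕ) + p.2 + 2 + k = 2 * s + 1 + 1 := by omega
  simp only [h_B, h_A]
  rfl

lemma Lam_transpose_mul_pencil_mul_Lam_eq_iff_blockConds (Pc : ℕ → Matrix (Fin n) (Fin n) F)
    (A B : Matrix (Fin (s + 1) × Fin n) (Fin (s + 1) × Fin n) F) :
    (Lam F s n)ᵀ * pencil A B * Lam F s n = polyOfCoeffs (2 * s + 1) Pc ↔
      blockConds (2 * s + 1) Pc A B := by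
  rw [Lam_transpose_mul_pencil_mul_Lam]
  exact polyOfCoeffs_inj

end BlockCoefficients

section BlockKroneckerPencil

variable {F : Type} [Field F] (n s : ℕ) {σ : F}

lemma isLinearization_blockKron (hσ : σ ≠ 0)
    (M : Matrix (Fin (s + 1) × Fin n) (Fin (s + 1) × Fin n) F[X]) :
    IsLinearization (2 * s * n) (blockKron F s n σ M) ((Lam F s n)ᵀ * M * Lam F s n) := by
  have h_dual := isDualPair_Lpen_Lam (F := F) s n
  have h_card : 2 * s * n = 2 * Fintype.card (Fin s × Fin n) := by simp [mul_assoc]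
  rw [h_card]
  exact (h_dual.units_smul (Units.mk0 σ hσ)).isLinearization_fromBlocks h_dual M

lemma isLinearization_revMat_blockKron (hσ : σ ≠ 0)
    (A B : Matrix (Fin (s + 1) × Fin n) (Fin (s + 1) × Fin n) F) :
    IsLinearization (2 * s * n) (revMat 1 (blockKron F s n σ (pencil A B)))
      (revMat (2 * s + 1) ((Lam F s n)ᵀ * pencil A B * Lam F s n)) := by
  have h_dual := isDualPair_revMat_Lpen_Lam (F := F) s n
  have h_rev : revMat (2 * s + 1) ((Lam F s n)ᵀ * pencil A B * Lam F s n) =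
      (revMat s (Lam F s n))ᵀ * revMat 1 (pencil A B) * revMat s (Lam F s n) := by
    have hΛ := hasGrade_Lam (F := F) s n
    have hM := hasGrade_pencil A B
    rw [show 2 * s + 1 = s + 1 + s by ring, revMat_mul (hΛ.transpose.mul hM) hΛ,
      revMat_mul hΛ.transpose hM, revMat_transpose]
  have h_card : 2 * s * n = 2 * Fintype.card (Fin s × Fin n) := by simp [mul_assoc]
  rw [h_rev, revMat_blockKron, h_card]
  exact (h_dual.units_smul (Units.mk0 σ hσ)).isLinearization_fromBlocks h_dual _

end BlockKroneckerPencil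

theorem stmt_3_general {F : Type} [Field F] (n s : ℕ) (Pc : ℕ → Matrix (Fin n) (Fin n) F)
    (A B : Matrix (Fin (s + 1) × Fin n) (Fin (s + 1) × Fin n) F) :
    ((Lam F s n)ᵀ * pencil A B * Lam F s n = polyOfCoeffs (2 * s + 1) Pc ↔
        blockConds (2 * s + 1) Pc A B) ∧
      (blockConds (2 * s + 1) Pc A B → ∀ σ : F, σ ≠ 0 →
        IsLinearization (2 * s * n) (blockKron F s n σ (pencil A B))
            (polyOfCoeffs (2 * s + 1) Pc) ∧
          IsLinearization (2 * s * n) (revMat 1 (blockKron F s n σ (pencil A B)))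
            (revMat (2 * s + 1) (polyOfCoeffs (2 * s + 1) Pc))) := by
  have h_iff := Lam_transpose_mul_pencil_mul_Lam_eq_iff_blockConds Pc A B
  refine ⟨h_iff, fun h_conds σ hσ => ?_⟩
  rw [← h_iff.mpr h_conds]
  exact ⟨isLinearization_blockKron n s hσ _, isLinearization_revMat_blockKron n s hσ A B⟩

/-- `(Λ_s(λ)ᵀ⊗I_n)(λB+A)(Λ_s(λ)⊗I_n) = P(λ)` holds iff the block
conditions `∑_{i+j=d+2-k} B_{ij} + ∑_{i+j=d+1-k} A_{ij} = P_k` hold for all `k = 0,…,d`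
(`d = 2s+1`); in particular, if they hold, then for each `σ ∈ {1,-1}` the block Kronecker
pencil built from `λB+A` is a strong linearization of `P` regarded as grade `d`. -/
theorem stmt_3 {F : Type} [Field F] (n s : ℕ)
    (Pc : ℕ → Matrix (Fin n) (Fin n) F)
    (A B : Matrix (Fin (s+1) × Fin n) (Fin (s+1) × Fin n) F) :
    ((Lam F s n)ᵀ * pencil A B * Lam F s n = polyOfCoeffs (2*s+1) Pc ↔
        blockConds (2*s+1) Pc A B) ∧
      (blockConds (2*s+1) Pc A B → ∀ σ : F, σ = 1 ∨ σ = -1 →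
        IsLinearization (2*s*n) (blockKron F s n σ (pencil A B)) (polyOfCoeffs (2*s+1) Pc) ∧
          IsLinearization (2*s*n) (revMat 1 (blockKron F s n σ (pencil A B)))
            (revMat (2*s+1) (polyOfCoeffs (2*s+1) Pc))) := by
  obtain ⟨h_iff, h_lin⟩ := stmt_3_general n s Pc A B
  exact ⟨h_iff, fun h_conds σ hσ => h_lin h_conds σ (by rcases hσ with rfl | rfl <;> simp)⟩
end

section
/- Let P(λ) = ∑_{k=0}^d λ^k P_k be a symmetric n×n matrix polynomial (P_k^T = P_k for all k) of odd degree d over a field F, and set s = (d−1)/2. Let A, B ∈ F^{(s+1)n×(s+1)n} be partitioned into (s+1)×(s+1) blocks A_{ij}, B_{ij} ∈ F^{n×n}. Then A and B are symmetric and satisfy the block conditions ∑_{i+j=d+2−k} B_{ij} + ∑_{i+j=d+1−k} A_{ij} = P_k for k = 0,…,d if and only if A_{ji} = A_{ij}^T and B_{ji} = B_{ij}^T for all i < j and, for every k = 1,…,s+1, B_{kk} = P_{d−2k+2} − ∑_{i+j=2k, i<j}(B_{ij}+B_{ij}^T) − ∑_{i+j=2k−1, i<j}(A_{ij}+A_{ij}^T)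 and A_{kk} = P_{d−2k+1} − ∑_{i+j=2k+1, i<j}(B_{ij}+B_{ij}^T) − ∑_{i+j=2k, i<j}(A_{ij}+A_{ij}^T). In particular, for every choice of the off-diagonal blocks A_{ij}, B_{ij} (i < j), these formulas produce symmetric matrices A, B satisfying the block conditions. -/
open Polynomial Matrix
open scoped Kronecker

/-! Summing the blocks of a symmetric matrix over an antidiagonal counts each pair `(i, j)`,
`(j, i)` with `i < j` once and, when the index sum is even, one diagonal block. For odd degree the
two sums in a block condition run over antidiagonals of opposite parity, so exactly one diagonal
block enters, and each of the `2s + 2` conditions can be solved for its own diagonal block. The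
solution is symmetric because everything else in the condition is. -/

section BlockMatrix

variable {ι n R : Type*} [LinearOrder ι]

theorem isSymm_iff_blk {A : Matrix (ι × n) (ι × n) R} :
    A.IsSymm ↔ (∀ i j, i < j → blk A j i = (blk A i j)ᵀ) ∧ ∀ i, (blk A i i).IsSymm := by
  have isSymm_iff_forall : A.IsSymm ↔ ∀ i j, (blk A i j)ᵀ = blk A j i := by
    simp only [IsSymm.ext_iff, Prod.forall, ← Matrix.ext_iff, transpose_apply, blk, of_apply]
    grind
  rw [isSymm_iff_forall]
  refine ⟨fun h => ⟨fun i j _ => (h i j).symm, fun i => h i i⟩, fun ⟨hoff, hdiag⟩ i j => ?_⟩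
  rcases lt_trichotomy i j with hij | rfl | hji
  · exact (hoff i j hij).symm
  · exact hdiag i
  · rw [hoff j i hji, transpose_transpose]

theorem sum_filter_eq_sum_lt_add_sum_diag [Fintype ι] [AddCommMonoid R] {r : ι → ι → Prop}
    [DecidableRel r] (hr : ∀ i j, r i j ↔ r j i) (f : ι → ι → R) :
    ∑ p : ι × ι with r p.1 p.2, f p.1 p.2 =
      ∑ p : ι × ι with r p.1 p.2 ∧ p.1 < p.2, (f p.1 p.2 + f p.2 p.1) + ∑ i with r i i, f i i := by
  have sum_swap : ∑ p : ι × ι with r p.1 p.2 ∧ p.1 < p.2, f p.2 p.1 =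
      ∑ p : ι × ι with r p.1 p.2 ∧ p.2 < p.1, f p.1 p.2 :=
    Finset.sum_equiv (Equiv.prodComm ι ι) (fun p => by simp [hr p.1 p.2]) (by simp)
  have sum_diag : ∑ i with r i i, f i i = ∑ p : ι × ι with r p.1 p.2 ∧ p.1 = p.2, f p.1 p.2 :=
    Finset.sum_nbij' (fun i => (i, i)) Prod.fst (by simp) (by grind) (by simp) (by grind) (by simp)
  rw [Finset.sum_add_distrib, sum_swap, sum_diag]
  simp only [Finset.sum_filter, ← Finset.sum_add_distrib]
  refine Finset.sum_congr rfl fun p _ => ?_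
  rcases lt_trichotomy p.1 p.2 with h | h | h
  · simp [h, h.not_gt, h.ne]
  · simp [h]
  · simp [h, h.not_gt, h.ne']

end BlockMatrix

section Antidiagonal

variable {n R : Type*} [AddCommMonoid R] {N : ℕ}

/-- The sum of the blocks `A_{ij}` for which `q (i + j)` holds. Selecting the antidiagonal by a
predicate, as in `(· + 1 = m)`, lets it be empty, as it is for `m = 0`. -/
def antidiagSum (q : ℕ → Prop) [DecidablePred q] (A : Matrix (Fin N × n) (Fin N × n) R) :
    Matrix n n R :=
  ∑ p : Fin N × Fin N with q (p.1 + p.2), blk A p.1 p.2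

/-- The sum of `A_{ij} + A_{ij}ᵀ` over the positions `i < j` for which `q (i + j)` holds: the
off-diagonal part of `antidiagSum q A` for symmetric `A`, in terms of the blocks above the
diagonal. -/
def antidiagPairSum (q : ℕ → Prop) [DecidablePred q] (A : Matrix (Fin N × n) (Fin N × n) R) :
    Matrix n n R :=
  ∑ p : Fin N × Fin N with q (p.1 + p.2) ∧ p.1 < p.2, (blk A p.1 p.2 + (blk A p.1 p.2)ᵀ)

variable {q : ℕ → Prop} [DecidablePred q] {A : Matrix (Fin N × n) (Fin N × n) R}

theorem isSymm_antidiagPairSum : (antidiagPairSum q A).IsSymm := by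
  simp only [IsSymm, antidiagPairSum, transpose_sum, (isSymm_add_transpose_self _).eq]

theorem antidiagSum_eq_antidiagPairSum_add_diag (hA : ∀ i j, i < j → blk A j i = (blk A i j)ᵀ) :
    antidiagSum q A =
      antidiagPairSum q A + ∑ i ∈ Finset.univ.filter (fun i : Fin N => q (i + i)), blk A i i := by
  rw [antidiagSum, antidiagPairSum,
    sum_filter_eq_sum_lt_add_sum_diag (r := fun i j : Fin N => q (i + j))
      (fun i j => by rw [add_comm])]
  congr 1
  refine Finset.sum_congr rfl fun p hp => ?_
  rw [hA p.1 p.2 (Finset.mem_filter.1 hp).2.2]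

theorem antidiagSum_two_mul (hA : ∀ i j, i < j → blk A j i = (blk A i j)ᵀ) (κ : Fin N) :
    antidiagSum (· = 2 * (κ : ℕ)) A = antidiagPairSum (· = 2 * (κ : ℕ)) A + blk A κ κ := by
  have mem_diag_iff (i : Fin N) : (i : ℕ) + i = 2 * κ ↔ i = κ := by omega
  simp only [antidiagSum_eq_antidiagPairSum_add_diag hA, mem_diag_iff, Finset.filter_eq',
    Finset.mem_univ, if_true, Finset.sum_singleton]

theorem antidiagSum_of_odd (hA : ∀ i j, i < j → blk A j i = (blk A i j)ᵀ)
    (hq : ∀ m, q m → Odd m) : antidiagSum q A = antidiagPairSum q A := by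
  have not_mem_diag (i : Fin N) : ¬ q (i + i) := fun h => by grind [hq _ h]
  simp only [antidiagSum_eq_antidiagPairSum_add_diag hA, not_mem_diag, Finset.filter_false,
    Finset.sum_empty, add_zero]

/-- The block conditions of `blockConds`, with entries in any additive commutative monoid instead
of a field and with blocks of any size. -/
def BlockConditions (d : ℕ) (P : ℕ → Matrix n n R) (A B : Matrix (Fin N × n) (Fin N × n) R) :
    Prop :=
  ∀ k ≤ d, antidiagSum (· + 2 + k = d + 2) B + antidiagSum (· + 2 + k = d + 1) A = P k

end Antidiagonal

theorem forall_le_two_mul_add_one_iff {s : ℕ} {p : ℕ → Prop} :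
    (∀ k ≤ 2 * s + 1, p k) ↔
      ∀ κ : Fin (s + 1), p (2 * s + 1 - 2 * κ) ∧ p (2 * s + 1 - 2 * κ - 1) := by
  refine ⟨fun h κ => ⟨h _ (by omega), h _ (by omega)⟩, fun h k hk => ?_⟩
  obtain ⟨h_odd, h_even⟩ := h ⟨(2 * s + 1 - k) / 2, by omega⟩
  rcases k.even_or_odd' with ⟨c, rfl | rfl⟩
  · convert h_even using 1
    grind
  · convert h_odd using 1
    grind

section Conditions

variable {n R : Type*} {s : ℕ} {P : ℕ → Matrix n n R}
  {A B : Matrix (Fin (s + 1) × n) (Fin (s + 1) × n) R}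

theorem blockConditions_iff_forall_fin [AddCommMonoid R] :
    BlockConditions (2 * s + 1) P A B ↔
      ∀ κ : Fin (s + 1),
        antidiagSum (· = 2 * (κ : ℕ)) B + antidiagSum (· + 1 = 2 * (κ : ℕ)) A =
            P (2 * s + 1 - 2 * κ) ∧
          antidiagSum (· = 2 * (κ : ℕ) + 1) B + antidiagSum (· = 2 * (κ : ℕ)) A =
            P (2 * s + 1 - 2 * κ - 1) := by
  rw [BlockConditions, forall_le_two_mul_add_one_iff]
  refine forall_congr' fun κ => ?_
  congr! 5 <;> omega

theorem blockConditions_iff_diag_blocks [AddCommGroup R]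
    (hA : ∀ i j, i < j → blk A j i = (blk A i j)ᵀ)
    (hB : ∀ i j, i < j → blk B j i = (blk B i j)ᵀ) :
    BlockConditions (2 * s + 1) P A B ↔
      ∀ κ : Fin (s + 1),
        blk B κ κ = P (2 * s + 1 - 2 * κ) - antidiagPairSum (· = 2 * (κ : ℕ)) B -
            antidiagPairSum (· + 1 = 2 * (κ : ℕ)) A ∧
          blk A κ κ = P (2 * s + 1 - 2 * κ - 1) - antidiagPairSum (· = 2 * (κ : ℕ) + 1) B -
            antidiagPairSum (· = 2 * (κ : ℕ)) A := by
  rw [blockConditions_iff_forall_fin]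
  refine forall_congr' fun κ => ?_
  rw [antidiagSum_two_mul hA, antidiagSum_two_mul hB,
    antidiagSum_of_odd (q := (· + 1 = 2 * (κ : ℕ))) hA (by grind),
    antidiagSum_of_odd (q := (· = 2 * (κ : ℕ) + 1)) hB (by grind),
    sub_sub, sub_sub, eq_sub_iff_add_eq', eq_sub_iff_add_eq',
    add_right_comm _ (blk B κ κ), ← add_assoc _ _ (blk A κ κ)]

end Conditions

theorem stmt_4_general {n R : Type*} [AddCommGroup R] {s : ℕ} {P : ℕ → Matrix n n R}
    (hP : ∀ k ≤ 2 * s + 1, (P k).IsSymm) {A B : Matrix (Fin (s + 1) × n) (Fin (s + 1) × n) R} :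
    (A.IsSymm ∧ B.IsSymm ∧ BlockConditions (2 * s + 1) P A B) ↔
      (∀ i j, i < j → blk A j i = (blk A i j)ᵀ ∧ blk B j i = (blk B i j)ᵀ) ∧
      ∀ κ : Fin (s + 1),
        blk B κ κ = P (2 * s + 1 - 2 * κ) - antidiagPairSum (· = 2 * (κ : ℕ)) B -
            antidiagPairSum (· + 1 = 2 * (κ : ℕ)) A ∧
          blk A κ κ = P (2 * s + 1 - 2 * κ - 1) - antidiagPairSum (· = 2 * (κ : ℕ) + 1) B -
            antidiagPairSum (· = 2 * (κ : ℕ)) A := by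
  constructor
  · rintro ⟨hA, hB, hcond⟩
    obtain ⟨hA_off, -⟩ := isSymm_iff_blk.1 hA
    obtain ⟨hB_off, -⟩ := isSymm_iff_blk.1 hB
    exact ⟨fun i j hij => ⟨hA_off i j hij, hB_off i j hij⟩,
      (blockConditions_iff_diag_blocks hA_off hB_off).1 hcond⟩
  · rintro ⟨hoff, hdiag⟩
    have hA_off i j hij := (hoff i j hij).1
    have hB_off i j hij := (hoff i j hij).2
    have hA_diag (κ : Fin (s + 1)) : (blk A κ κ).IsSymm := by
      rw [(hdiag κ).2]
      exact ((hP _ (by omega)).sub isSymm_antidiagPairSum).sub isSymm_antidiagPairSum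
    have hB_diag (κ : Fin (s + 1)) : (blk B κ κ).IsSymm := by
      rw [(hdiag κ).1]
      exact ((hP _ (by omega)).sub isSymm_antidiagPairSum).sub isSymm_antidiagPairSum
    exact ⟨isSymm_iff_blk.2 ⟨hA_off, hA_diag⟩, isSymm_iff_blk.2 ⟨hB_off, hB_diag⟩,
      (blockConditions_iff_diag_blocks hA_off hB_off).2 hdiag⟩

/-- For a symmetric matrix polynomial `P` of odd degree `d = 2s+1`:
`A`, `B` are symmetric and satisfy the block conditions iff the off-diagonal blocks satisfy
`A_{ji} = A_{ij}ᵀ`, `B_{ji} = B_{ij}ᵀ` and the diagonal blocks are given by the explicit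
formulas of Theorem 4.4 (indices below are 0-based: `κ = k-1`). -/
theorem stmt_4 {F : Type} [Field F] (n s : ℕ)
    (Pc : ℕ → Matrix (Fin n) (Fin n) F)
    (hsym : ∀ k, (Pc k)ᵀ = Pc k) (hdeg : Pc (2*s+1) ≠ 0)
    (A B : Matrix (Fin (s+1) × Fin n) (Fin (s+1) × Fin n) F) :
    (Aᵀ = A ∧ Bᵀ = B ∧ blockConds (2*s+1) Pc A B) ↔
      ((∀ i j : Fin (s+1), i < j →
          blk A j i = (blk A i j)ᵀ ∧ blk B j i = (blk B i j)ᵀ) ∧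
        ∀ κ : Fin (s+1),
          (blk B κ κ =
            Pc (2*s+1 - 2*(κ : ℕ)) -
              (∑ p ∈ Finset.univ.filter (fun p : Fin (s+1) × Fin (s+1) =>
                  (p.1 : ℕ) + (p.2 : ℕ) = 2*(κ : ℕ) ∧ p.1 < p.2),
                (blk B p.1 p.2 + (blk B p.1 p.2)ᵀ)) -
              (∑ p ∈ Finset.univ.filter (fun p : Fin (s+1) × Fin (s+1) =>
                  (p.1 : ℕ) + (p.2 : ℕ) + 1 = 2*(κ : ℕ) ∧ p.1 < p.2),
                (blk A p.1 p.2 + (blk A p.1 p.2)ᵀ))) ∧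
          (blk A κ κ =
            Pc (2*s+1 - 2*(κ : ℕ) - 1) -
              (∑ p ∈ Finset.univ.filter (fun p : Fin (s+1) × Fin (s+1) =>
                  (p.1 : ℕ) + (p.2 : ℕ) = 2*(κ : ℕ) + 1 ∧ p.1 < p.2),
                (blk B p.1 p.2 + (blk B p.1 p.2)ᵀ)) -
              (∑ p ∈ Finset.univ.filter (fun p : Fin (s+1) × Fin (s+1) =>
                  (p.1 : ℕ) + (p.2 : ℕ) = 2*(κ : ℕ) ∧ p.1 < p.2),
                (blk A p.1 p.2 + (blk A p.1 p.2)ᵀ)))) :=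
  stmt_4_general fun k _ => hsym k
end
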